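/- arXiv:2207.09317 — 5 statements merged into one kernel-verified Lean document; each statement's English description precedes it below -/
import Mathlib

section
/- Let B be a real Banach space with dual B* and let C be a nonempty subset of B. The generalized projection π_C is monotone on B*: for all φ₁, φ₂ ∈ B*, if u₁ ∈ π_C(φ₁) and u₂ ∈ π_C(φ₂), then ⟨φ₁ − φ₂, u₁ − u₂⟩ ≥ 0. -/
open Set Filter

noncomputable section

/-- The normalized duality map `J x = {φ : ⟨φ,x⟩ = ‖x‖² and ‖φ‖ = ‖x‖}`. -/
def dualityMap {B : Type*} [NormedAddCommGroup B] [NormedSpace ℝ B] (x : B) :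
    Set (B →L[ℝ] ℝ) :=
  {φ | φ x = ‖x‖ ^ 2 ∧ ‖φ‖ = ‖x‖}

/-- The Lyapunov functional `V(φ,x) = ‖φ‖² - 2⟨φ,x⟩ + ‖x‖²`. -/
def lyapV {B : Type*} [NormedAddCommGroup B] [NormedSpace ℝ B] (φ : B →L[ℝ] ℝ) (x : B) : ℝ :=
  ‖φ‖ ^ 2 - 2 * φ x + ‖x‖ ^ 2

/-- The generalized projection: the set of minimizers of `V(φ, ·)` over `C`. -/
def genProj {B : Type*} [NormedAddCommGroup B] [NormedSpace ℝ B] (C : Set B)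
    (φ : B →L[ℝ] ℝ) : Set B :=
  {u | u ∈ C ∧ ∀ y ∈ C, lyapV φ u ≤ lyapV φ y}

/-- The generalized metric projection `Π_C x = ⋃_{jx ∈ J x} π_C (jx)`. -/
def genMetricProj {B : Type*} [NormedAddCommGroup B] [NormedSpace ℝ B] (C : Set B) (x : B) :
    Set B :=
  ⋃ φ ∈ dualityMap x, genProj C φ

/-- The metric projection: the set of nearest points to `x` in `C`. -/
def metricProj {B : Type*} [NormedAddCommGroup B] [NormedSpace ℝ B] (C : Set B) (x : B) :
    Set B :=
  {u | u ∈ C ∧ ∀ y ∈ C, ‖x - u‖ ≤ ‖x - y‖}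

/-- The set of generalized identical points of `x`. -/
def genIdentical {B : Type*} [NormedAddCommGroup B] [NormedSpace ℝ B] (x : B) : Set B :=
  {y | (dualityMap x ∩ dualityMap y).Nonempty}

/-!
Up to the constant `‖φ‖²` and a factor `2`, the points of `π_C(φ)` are the minimizers over `C` of
`‖x‖² / 2 - φ x`, so `φ` is a subgradient at them, relative to `C`, of `‖x‖² / 2`. Monotonicity is
then that of a subdifferential: the increment of `‖x‖² / 2` from `u₂` to `u₁` lies between the
increments of `φ₂` and of `φ₁`.
-/

section IsMinOnSub

variable {α R : Type*} [AddCommGroup R] [PartialOrder R] [IsOrderedAddMonoid R] {C : Set α}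

theorem sub_le_sub_of_isMinOn_sub {f g : α → R} {u y : α} (hu : IsMinOn (f - g) C u)
    (hy : y ∈ C) : f u - f y ≤ g u - g y := by
  have hle : f u - g u ≤ f y - g y := hu hy
  rwa [sub_le_sub_iff, add_comm (g u), ← sub_le_sub_iff]

theorem sub_le_sub_of_isMinOn_sub_of_isMinOn_sub {f g₁ g₂ : α → R} {u₁ u₂ : α}
    (hu₁ : u₁ ∈ C) (hu₂ : u₂ ∈ C) (hmin₁ : IsMinOn (f - g₁) C u₁)
    (hmin₂ : IsMinOn (f - g₂) C u₂) : g₂ u₁ - g₂ u₂ ≤ g₁ u₁ - g₁ u₂ :=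
  calc
    g₂ u₁ - g₂ u₂ ≤ f u₁ - f u₂ := by
      simpa only [neg_sub] using neg_le_neg (sub_le_sub_of_isMinOn_sub hmin₂ hu₁)
    _ ≤ g₁ u₁ - g₁ u₂ := sub_le_sub_of_isMinOn_sub hmin₁ hu₂

theorem map_sub_le_map_sub_of_isMinOn_sub {F : Type*} [AddGroup α] [FunLike F α R]
    [AddMonoidHomClass F α R] {f : α → R} {φ₁ φ₂ : F} {u₁ u₂ : α}
    (hu₁ : u₁ ∈ C) (hu₂ : u₂ ∈ C) (hmin₁ : IsMinOn (f - ⇑φ₁) C u₁)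
    (hmin₂ : IsMinOn (f - ⇑φ₂) C u₂) : φ₂ (u₁ - u₂) ≤ φ₁ (u₁ - u₂) := by
  simpa only [map_sub] using sub_le_sub_of_isMinOn_sub_of_isMinOn_sub hu₁ hu₂ hmin₁ hmin₂

end IsMinOnSub

section GeneralizedProjection

variable {B : Type*} [NormedAddCommGroup B] [NormedSpace ℝ B] {C : Set B}

theorem lyapV_le_lyapV_iff {φ : B →L[ℝ] ℝ} {x y : B} :
    lyapV φ x ≤ lyapV φ y ↔ ‖x‖ ^ 2 / 2 - φ x ≤ ‖y‖ ^ 2 / 2 - φ y := by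
  unfold lyapV
  constructor <;> intro h <;> linarith

theorem mem_genProj_iff_isMinOn {φ : B →L[ℝ] ℝ} {u : B} :
    u ∈ genProj C φ ↔ u ∈ C ∧ IsMinOn ((fun x ↦ ‖x‖ ^ 2 / 2) - ⇑φ) C u :=
  and_congr_right fun _ ↦ forall₂_congr fun _ _ ↦ lyapV_le_lyapV_iff

theorem statement_2_general {φ₁ φ₂ : B →L[ℝ] ℝ} {u₁ u₂ : B}
    (h₁ : u₁ ∈ genProj C φ₁) (h₂ : u₂ ∈ genProj C φ₂) :
    0 ≤ (φ₁ - φ₂) (u₁ - u₂) := by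
  obtain ⟨hu₁, hmin₁⟩ := mem_genProj_iff_isMinOn.mp h₁
  obtain ⟨hu₂, hmin₂⟩ := mem_genProj_iff_isMinOn.mp h₂
  exact sub_nonneg.mpr (map_sub_le_map_sub_of_isMinOn_sub hu₁ hu₂ hmin₁ hmin₂)

end GeneralizedProjection

theorem statement_2 {B : Type*} [NormedAddCommGroup B] [NormedSpace ℝ B] [CompleteSpace B]
    (C : Set B) (hC : C.Nonempty) (φ₁ φ₂ : B →L[ℝ] ℝ) (u₁ u₂ : B)
    (h₁ : u₁ ∈ genProj C φ₁) (h₂ : u₂ ∈ genProj C φ₂) :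
    0 ≤ (φ₁ - φ₂) (u₁ - u₂) :=
  statement_2_general h₁ h₂
end
end

section
/- Let B be a real Banach space with dual B* and let C ⊆ B be nonempty, closed, and convex. Then for every φ ∈ B*, if the set π_C(φ) is nonempty, it is closed, convex, and bounded. -/
open Set Filter

noncomputable section

/-!
The minimizers of `V(φ, ·)` over `C` form the intersection of `C` with the sublevel sets of
`V(φ, ·)` at the heights `V(φ, y)`, `y ∈ C`. These sublevel sets are closed and convex because
`V(φ, ·)` is continuous and convex, and bounded because `V(φ, x) ≥ (‖x‖ - ‖φ‖)²`.
-/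

section

variable {B : Type*} [NormedAddCommGroup B] [NormedSpace ℝ B]

theorem continuous_lyapV (φ : B →L[ℝ] ℝ) : Continuous (lyapV φ) := by
  unfold lyapV
  fun_prop

theorem convexOn_lyapV (φ : B →L[ℝ] ℝ) : ConvexOn ℝ univ (lyapV φ) := by
  have hnorm : ConvexOn ℝ univ fun x : B => ‖x‖ ^ 2 :=
    convexOn_univ_norm.pow (fun _ _ => norm_nonneg _) 2
  have hpairing : ConvexOn ℝ univ ((-2 : ℝ) • φ) :=
    ((-2 : ℝ) • φ).toLinearMap.convexOn convex_univ
  refine ((hpairing.add hnorm).add_const (‖φ‖ ^ 2)).congr fun x _ => ?_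
  simp only [lyapV, Pi.add_apply, smul_apply, smul_eq_mul]
  ring

theorem sq_norm_sub_norm_le_lyapV (φ : B →L[ℝ] ℝ) (x : B) :
    (‖x‖ - ‖φ‖) ^ 2 ≤ lyapV φ x := by
  have hpairing : φ x ≤ ‖φ‖ * ‖x‖ := (le_abs_self _).trans (φ.le_opNorm x)
  calc (‖x‖ - ‖φ‖) ^ 2 = ‖φ‖ ^ 2 - 2 * (‖φ‖ * ‖x‖) + ‖x‖ ^ 2 := by ring
    _ ≤ ‖φ‖ ^ 2 - 2 * φ x + ‖x‖ ^ 2 := by gcongr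

theorem isClosed_setOf_lyapV_le (φ : B →L[ℝ] ℝ) (r : ℝ) : IsClosed {x | lyapV φ x ≤ r} :=
  isClosed_le (continuous_lyapV φ) continuous_const

theorem convex_setOf_lyapV_le (φ : B →L[ℝ] ℝ) (r : ℝ) : Convex ℝ {x | lyapV φ x ≤ r} := by
  simpa only [mem_univ, true_and] using (convexOn_lyapV φ).convex_le r

theorem isBounded_setOf_lyapV_le (φ : B →L[ℝ] ℝ) (r : ℝ) :
    Bornology.IsBounded {x | lyapV φ x ≤ r} := by
  refine isBounded_iff_forall_norm_le.2 ⟨√r + ‖φ‖, fun x hx => ?_⟩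
  have hsq : (‖x‖ - ‖φ‖) ^ 2 ≤ r := (sq_norm_sub_norm_le_lyapV φ x).trans hx
  exact sub_le_iff_le_add.1 (Real.le_sqrt_of_sq_le hsq)

theorem genProj_eq_inter_iInter (C : Set B) (φ : B →L[ℝ] ℝ) :
    genProj C φ = C ∩ ⋂ y ∈ C, {x | lyapV φ x ≤ lyapV φ y} := by
  ext u
  simp only [genProj, mem_inter_iff, mem_iInter, mem_ofPred_eq]

theorem isClosed_genProj {C : Set B} (hC : IsClosed C) (φ : B →L[ℝ] ℝ) :
    IsClosed (genProj C φ) := by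
  rw [genProj_eq_inter_iInter]
  exact hC.inter (isClosed_biInter fun y _ => isClosed_setOf_lyapV_le φ (lyapV φ y))

theorem convex_genProj {C : Set B} (hC : Convex ℝ C) (φ : B →L[ℝ] ℝ) :
    Convex ℝ (genProj C φ) := by
  rw [genProj_eq_inter_iInter]
  exact hC.inter (convex_iInter₂ fun y _ => convex_setOf_lyapV_le φ (lyapV φ y))

theorem isBounded_genProj (C : Set B) (φ : B →L[ℝ] ℝ) : Bornology.IsBounded (genProj C φ) := by
  obtain rfl | ⟨y, hy⟩ := C.eq_empty_or_nonempty
  · exact Bornology.isBounded_empty.subset fun _ hu => hu.1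
  · exact (isBounded_setOf_lyapV_le φ (lyapV φ y)).subset fun _ hu => hu.2 y hy

theorem statement_3_general {C : Set B} (hclosed : IsClosed C) (hconv : Convex ℝ C)
    (φ : B →L[ℝ] ℝ) :
    IsClosed (genProj C φ) ∧ Convex ℝ (genProj C φ) ∧
      Bornology.IsBounded (genProj C φ) :=
  ⟨isClosed_genProj hclosed φ, convex_genProj hconv φ, isBounded_genProj C φ⟩

end

theorem statement_3 {B : Type*} [NormedAddCommGroup B] [NormedSpace ℝ B] [CompleteSpace B]
    (C : Set B) (hC : C.Nonempty) (hclosed : IsClosed C) (hconv : Convex ℝ C)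
    (φ : B →L[ℝ] ℝ) (hne : (genProj C φ).Nonempty) :
    IsClosed (genProj C φ) ∧ Convex ℝ (genProj C φ) ∧
      Bornology.IsBounded (genProj C φ) :=
  statement_3_general hclosed hconv φ
end
end

section
/- In ℓ¹, for each positive integer n let eₙ be the n-th standard unit vector and set C equal to the closed convex hull of { ((n+1)/n)·eₙ : n = 1, 2, … }. Then every y ∈ C satisfies ‖y‖ > 1, while inf_{y ∈ C} ‖y‖ = 1; in particular, the norm attains no minimum on C (so Π_C(0) = ∅ and C is not generalized proximal). -/
open scoped ENNReal

noncomputable section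

/-!
The functional `f y = ∑ n/(n+1) · yₙ` on `ℓ¹` equals `1` at every generator `((n+1)/n)·eₙ`, hence on
all of `C`. Its weights tend to `1` but are all smaller than `1`, so it has norm `1` and does not
attain it: `1 = f y < ‖y‖` on `C`, while the generators have norms `(n+1)/n → 1`.
-/

theorem eq_of_mem_closure_convexHull_of_forall_eq {𝕜 E F : Type*}
    [Semiring 𝕜] [PartialOrder 𝕜] [AddCommMonoid E] [Module 𝕜 E] [TopologicalSpace E]
    [AddCommMonoid F] [Module 𝕜 F] [TopologicalSpace F] [T1Space F]
    {f : E →L[𝕜] F} {s : Set E} {c : F} (hs : ∀ x ∈ s, f x = c) {y : E}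
    (hy : y ∈ closure (convexHull 𝕜 s)) : f y = c :=
  closure_minimal (convexHull_min hs ((convex_singleton c).linear_preimage f.toLinearMap))
    (isClosed_singleton.preimage f.continuous) hy

theorem not_exists_forall_le_of_isGLB_image {α β : Type*} [Preorder β] {f : α → β}
    {s : Set α} {b : β} (hglb : IsGLB (f '' s) b) (hlt : ∀ x ∈ s, b < f x) :
    ¬∃ u ∈ s, ∀ x ∈ s, f u ≤ f x := by
  rintro ⟨u, hu, hmin⟩
  exact (hlt u hu).not_ge (hglb.2 (Set.forall_mem_image.mpr hmin))

section WeightedSum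

variable {ι 𝕜 : Type*} [RCLike 𝕜]

theorem hasSum_norm_lp_one {E : ι → Type*} [∀ i, NormedAddCommGroup (E i)] (y : lp E 1) :
    HasSum (fun i => ‖y i‖) ‖y‖ := by
  simpa using lp.hasSum_norm (p := 1) (by simp) y

/-- The continuous functional `y ↦ ∑ wᵢ yᵢ` on `ℓ¹` defined by a bounded family of weights `w`,
that is, the image of `w` under the canonical map from `ℓ^∞` to the dual of `ℓ¹`. -/
def weightedSum (w : lp (fun _ : ι => 𝕜) ∞) : lp (fun _ : ι => 𝕜) 1 →L[𝕜] 𝕜 :=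
  lp.dualPairing ∞ 1 (fun _ => ContinuousLinearMap.mul 𝕜 𝕜) (K := 1) (fun _ => by simp) w

theorem weightedSum_apply (w : lp (fun _ : ι => 𝕜) ∞) (y : lp (fun _ : ι => 𝕜) 1) :
    weightedSum w y = ∑' i, w i * y i :=
  rfl

theorem weightedSum_single [DecidableEq ι] (w : lp (fun _ : ι => 𝕜) ∞) (i : ι) (c : 𝕜) :
    weightedSum w (lp.single 1 i c) = w i * c := by
  rw [weightedSum_apply, tsum_eq_single i fun j hj => by simp [hj], lp.single_apply_self]

theorem norm_weightedSum_lt {w : lp (fun _ : ι => 𝕜) ∞} (hw : ∀ i, ‖w i‖ < 1)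
    {y : lp (fun _ : ι => 𝕜) 1} (hy : y ≠ 0) : ‖weightedSum w y‖ < ‖y‖ := by
  obtain ⟨i, hi⟩ : ∃ i, y i ≠ 0 := by
    contrapose! hy
    exact lp.ext (funext hy)
  have hy_sum := (hasSum_norm_lp_one y).summable
  have hle (j : ι) : ‖w j * y j‖ ≤ ‖y j‖ := by
    rw [norm_mul]
    exact mul_le_of_le_one_left (norm_nonneg _) (hw j).le
  have hlt : ‖w i * y i‖ < ‖y i‖ := by
    rw [norm_mul]
    exact mul_lt_of_lt_one_left (norm_pos_iff.mpr hi) (hw i)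
  have hwy_sum : Summable fun j => ‖w j * y j‖ :=
    hy_sum.of_nonneg_of_le (fun _ => norm_nonneg _) hle
  calc
    ‖weightedSum w y‖ ≤ ∑' j, ‖w j * y j‖ := norm_tsum_le_tsum_norm hwy_sum
    _ < ∑' j, ‖y j‖ := hwy_sum.tsum_lt_tsum hle hlt hy_sum
    _ = ‖y‖ := (hasSum_norm_lp_one y).tsum_eq

end WeightedSum

theorem lt_norm_of_mem_closure_convexHull_smul_single {ι : Type*} [DecidableEq ι]
    {a : ι → ℝ} {r : ℝ} (hr : 0 < r) (ha : ∀ i, r < a i) {y : lp (fun _ : ι => ℝ) 1}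
    (hy : y ∈ closure (convexHull ℝ {v | ∃ i, v = a i • lp.single 1 i (1 : ℝ)})) :
    r < ‖y‖ := by
  have ha_pos (i : ι) : 0 < a i := hr.trans (ha i)
  have hw_lt (i : ι) : ‖r / a i‖ < 1 := by
    rw [Real.norm_of_nonneg (div_pos hr (ha_pos i)).le]
    exact (div_lt_one (ha_pos i)).mpr (ha i)
  let w : lp (fun _ : ι => ℝ) ∞ :=
    ⟨fun i => r / a i, memℓp_infty ⟨1, Set.forall_mem_range.mpr fun i => (hw_lt i).le⟩⟩
  have hfy : weightedSum w y = r := by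
    refine eq_of_mem_closure_convexHull_of_forall_eq ?_ hy
    rintro _ ⟨i, rfl⟩
    rw [map_smul, weightedSum_single, mul_one, smul_eq_mul]
    exact mul_div_cancel₀ r (ha_pos i).ne'
  have hy_ne : y ≠ 0 := by
    rintro rfl
    exact hr.ne ((map_zero _).symm.trans hfy)
  calc
    r = weightedSum w y := hfy.symm
    _ ≤ ‖weightedSum w y‖ := Real.le_norm_self _
    _ < ‖y‖ := norm_weightedSum_lt hw_lt hy_ne

theorem statement_7_general {ι : Type*} [DecidableEq ι] {a : ι → ℝ} {r : ℝ} (hr : 0 < r)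
    (ha : ∀ i, r < a i) (hglb : IsGLB (Set.range a) r) :
    let C : Set (lp (fun _ : ι => ℝ) 1) :=
      closure (convexHull ℝ {v | ∃ i, v = a i • lp.single 1 i (1 : ℝ)})
    (∀ y ∈ C, r < ‖y‖) ∧ IsGLB ((fun y => ‖y‖) '' C) r ∧
      ¬∃ u ∈ C, ∀ y ∈ C, ‖u‖ ≤ ‖y‖ := by
  intro C
  have hlt : ∀ y ∈ C, r < ‖y‖ := fun y => lt_norm_of_mem_closure_convexHull_smul_single hr ha
  have hnorms : Set.range a ⊆ (fun y => ‖y‖) '' C := by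
    rintro _ ⟨i, rfl⟩
    refine ⟨a i • lp.single 1 i (1 : ℝ), subset_closure (subset_convexHull ℝ _ ⟨i, rfl⟩), ?_⟩
    simp [norm_smul, lp.norm_single, abs_of_pos (hr.trans (ha i))]
  have hglbC : IsGLB ((fun y => ‖y‖) '' C) r :=
    ⟨Set.forall_mem_image.mpr fun y hy => (hlt y hy).le,
      fun _ hb => hglb.2 (lowerBounds_mono_set hnorms hb)⟩
  exact ⟨hlt, hglbC, not_exists_forall_le_of_isGLB_image hglbC hlt⟩

theorem one_lt_pnat_add_one_div (n : ℕ+) : 1 < ((n : ℝ) + 1) / n :=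
  (one_lt_div (by positivity)).mpr (lt_add_one _)

theorem isGLB_range_pnat_add_one_div : IsGLB (Set.range fun n : ℕ+ => ((n : ℝ) + 1) / n) 1 := by
  have hlim : Filter.Tendsto (fun n : ℕ => ((n : ℝ) + 1) / n) Filter.atTop (nhds 1) := by
    simpa [add_comm] using tendsto_add_mul_div_add_mul_atTop_nhds (1 : ℝ) 0 1 one_ne_zero
  exact isGLB_of_mem_closure (Set.forall_mem_range.mpr fun n => (one_lt_pnat_add_one_div n).le)
    (mem_closure_of_tendsto (PNat.tendsto_comp_val_iff.mpr hlim)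
      (Filter.Eventually.of_forall Set.mem_range_self))

/-- In `ℓ¹`, with `C` the closed convex hull of `{((n+1)/n)·eₙ : n ≥ 1}`,
every `y ∈ C` has `‖y‖ > 1`, yet `inf {‖y‖ : y ∈ C} = 1`; in particular the norm
attains no minimum on `C` (so `Π_C(0) = ∅`, i.e. `C` is not generalized proximal). -/
theorem statement_7 :
    let C : Set (lp (fun _ : ℕ+ => ℝ) 1) :=
      closure (convexHull ℝ
        {v | ∃ n : ℕ+, v = (((n : ℝ) + 1) / (n : ℝ)) • lp.single 1 n (1 : ℝ)})
    (∀ y ∈ C, 1 < ‖y‖) ∧ IsGLB ((fun y => ‖y‖) '' C) 1 ∧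
      ¬∃ u ∈ C, ∀ y ∈ C, ‖u‖ ≤ ‖y‖ :=
  statement_7_general one_pos one_lt_pnat_add_one_div isGLB_range_pnat_add_one_div
end
end

section
/- A real Banach space B is strictly convex if and only if 𝓙(x) = {x} for every x ∈ B, where 𝓙(x) = {y ∈ B : J(x) ∩ J(y) ≠ ∅} is the set of generalized identical points of x. -/
open Set Filter

noncomputable section

/-!
Two points share a norming functional exactly when they have the same norm and the triangle
inequality for their sum is an equality: a common functional attains its norm on the sum, and
conversely a functional norming the midpoint must norm both endpoints. Strict convexity says that
equality in the triangle inequality between vectors of equal norm forces the vectors to coincide.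
-/

theorem apply_le_opNorm_mul_norm {E : Type*} [SeminormedAddCommGroup E] [NormedSpace ℝ E]
    (φ : E →L[ℝ] ℝ) (x : E) : φ x ≤ ‖φ‖ * ‖x‖ :=
  (le_abs_self _).trans (φ.le_opNorm x)

section DualityMap

variable {B : Type*} [NormedAddCommGroup B] [NormedSpace ℝ B] {x y : B} {φ : B →L[ℝ] ℝ}

theorem dualityMap_nonempty (x : B) : (dualityMap x).Nonempty := by
  by_cases hx : ‖x‖ = 0
  · exact ⟨0, by simp [hx], by simp [hx]⟩
  · obtain ⟨g, hg, hgx⟩ := exists_dual_vector ℝ x hx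
    have hgx : g x = ‖x‖ := hgx
    exact ⟨‖x‖ • g, by simp [hgx, sq], by simp [norm_smul, hg]⟩

theorem norm_eq_of_mem_dualityMap (hx : φ ∈ dualityMap x) (hy : φ ∈ dualityMap y) :
    ‖x‖ = ‖y‖ :=
  hx.2.symm.trans hy.2

theorem norm_add_eq_of_mem_dualityMap (hx : φ ∈ dualityMap x) (hy : φ ∈ dualityMap y) :
    ‖x + y‖ = ‖x‖ + ‖y‖ := by
  have hxy : ‖x‖ = ‖y‖ := norm_eq_of_mem_dualityMap hx hy
  refine (norm_add_le x y).antisymm ?_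
  rcases (norm_nonneg x).eq_or_lt with hx0 | hxpos
  · simp only [← hxy, ← hx0, add_zero, norm_nonneg]
  · refine le_of_mul_le_mul_left ?_ hxpos
    calc ‖x‖ * (‖x‖ + ‖y‖) = ‖x‖ ^ 2 + ‖y‖ ^ 2 := by rw [← hxy]; ring
      _ = φ (x + y) := by rw [map_add, hx.1, hy.1]
      _ ≤ ‖φ‖ * ‖x + y‖ := apply_le_opNorm_mul_norm φ (x + y)
      _ = ‖x‖ * ‖x + y‖ := by rw [hx.2]

theorem dualityMap_midpoint_subset (hnorm : ‖x‖ = ‖y‖) (hadd : ‖x + y‖ = ‖x‖ + ‖y‖) :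
    dualityMap (midpoint ℝ x y) ⊆ dualityMap x ∩ dualityMap y := by
  rintro φ ⟨hφm, hφ⟩
  have hm : ‖midpoint ℝ x y‖ = ‖x‖ := by
    rw [midpoint_eq_smul_add, invOf_eq_inv, norm_smul, hadd, ← hnorm,
      Real.norm_of_nonneg (by simp)]
    ring
  have hsum : φ x + φ y = 2 * ‖x‖ ^ 2 := by
    rw [hm, midpoint_eq_smul_add, invOf_eq_inv, map_smul, map_add, smul_eq_mul] at hφm
    linarith
  have hφx : φ x ≤ ‖x‖ ^ 2 := by
    simpa only [hφ, hm, sq] using apply_le_opNorm_mul_norm φ x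
  have hφy : φ y ≤ ‖x‖ ^ 2 := by
    simpa only [hφ, hm, ← hnorm, sq] using apply_le_opNorm_mul_norm φ y
  exact ⟨⟨by linarith, hφ.trans hm⟩, ⟨by rw [← hnorm]; linarith, hφ.trans (hm.trans hnorm)⟩⟩

theorem mem_genIdentical_iff : y ∈ genIdentical x ↔ ‖x‖ = ‖y‖ ∧ ‖x + y‖ = ‖x‖ + ‖y‖ := by
  constructor
  · rintro ⟨φ, hx, hy⟩
    exact ⟨norm_eq_of_mem_dualityMap hx hy, norm_add_eq_of_mem_dualityMap hx hy⟩
  · rintro ⟨hnorm, hadd⟩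
    exact (dualityMap_nonempty (midpoint ℝ x y)).mono (dualityMap_midpoint_subset hnorm hadd)

theorem mem_genIdentical_self (x : B) : x ∈ genIdentical x :=
  (dualityMap_nonempty x).mono (subset_inter subset_rfl subset_rfl)

end DualityMap

theorem statement_13_general {B : Type*} [NormedAddCommGroup B] [NormedSpace ℝ B] :
    StrictConvexSpace ℝ B ↔ ∀ x : B, genIdentical x = {x} := by
  constructor
  · intro _ x
    refine eq_singleton_iff_unique_mem.2 ⟨mem_genIdentical_self x, fun y hy => ?_⟩
    obtain ⟨hnorm, hadd⟩ := mem_genIdentical_iff.1 hy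
    exact (eq_of_norm_eq_of_norm_add_eq hnorm hadd).symm
  · intro h
    refine StrictConvexSpace.of_norm_add_ne_two fun x y hx hy hne hxy => hne ?_
    have hmem : y ∈ genIdentical x := mem_genIdentical_iff.2
      ⟨hx.trans hy.symm, by rw [hxy, hx, hy, one_add_one_eq_two]⟩
    rw [h x] at hmem
    exact hmem.symm

theorem statement_13 {B : Type*} [NormedAddCommGroup B] [NormedSpace ℝ B] [CompleteSpace B] :
    StrictConvexSpace ℝ B ↔ ∀ x : B, genIdentical x = {x} :=
  statement_13_general
end
end

section
/- Let r > 0 and let g = (g₁, g₂, …) be an absolutely summable real sequence with gₙ ≥ 0 for all n, ∑_{n≥1} gₙ = r, and such that the set {n : gₙ > 0} is infinite. For a real sequence s = (s₁, s₂, …) with sₙ → 0, define V(g, s) = r² − 2 ∑_{n≥1} gₙ sₙ + (sup_{n≥1} |sₙ|)². Then V(g, s) > 0 for every such sequence s, while inf { V(g, s) : s a real sequence with sₙ → 0 } = 0. In particular, the infimum is not attained (π_{c₀}(g) = ∅). -/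
open Filter

noncomputable section

/-!
With `M = ‖s‖∞`, the functional is `V(g, s) = (‖g‖₁ - M)² + 2 (‖g‖₁ M - ⟨g, s⟩)`, and both terms are
nonnegative by Hölder's inequality. If `s` is a null sequence and `M > 0`, then `|sₙ| < M` for all
but finitely many `n`, hence for some `n` with `gₙ ≠ 0`, so Hölder's inequality is strict; if
`M = 0`, the first term is `‖g‖₁² > 0`. The infimum is nevertheless `0`, as is seen by testing on
`‖g‖₁` times the sign sequence of `g` truncated to larger and larger finite sets.
-/

open Topology

/-- The functional `V(g, s) = ‖g‖₁² - 2⟨g, s⟩ + ‖s‖∞²` from the definition of the generalized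
projection `π_{c₀}`, on families over an arbitrary index type. It has this meaning only for
summable `g` and bounded `s`: otherwise the sums and the supremum may take the junk value `0`. -/
def lyapunovFunctional {ι : Type*} (g s : ι → ℝ) : ℝ :=
  (∑' n, |g n|) ^ 2 - 2 * (∑' n, g n * s n) + (⨆ n, |s n|) ^ 2

/-- The sign sequence of `g` cut off outside the finite set `F`: a finitely supported element of
the unit ball of `c₀` which almost norms `g` when `F` is large. -/
def truncatedSign {ι : Type*} (g : ι → ℝ) (F : Finset ι) : ι → ℝ :=
  (F : Set ι).indicator fun n => (SignType.sign (g n) : ℝ)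

section Holder

variable {ι : Type*} {g s : ι → ℝ}

lemma abs_mul_le_abs_mul_iSup_abs (g : ι → ℝ) (hs : BddAbove (Set.range fun n => |s n|)) (n : ι) :
    |g n * s n| ≤ |g n| * ⨆ k, |s k| := by
  rw [abs_mul]
  exact mul_le_mul_of_nonneg_left (le_ciSup hs n) (abs_nonneg _)

lemma summable_mul_of_bddAbove_abs (hg : Summable g) (hs : BddAbove (Set.range fun n => |s n|)) :
    Summable fun n => g n * s n :=
  .of_norm_bounded (hg.abs.mul_right _) (abs_mul_le_abs_mul_iSup_abs g hs)

lemma tsum_mul_le_tsum_abs_mul_iSup_abs (hg : Summable g)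
    (hs : BddAbove (Set.range fun n => |s n|)) :
    ∑' n, g n * s n ≤ (∑' n, |g n|) * ⨆ n, |s n| := by
  rw [← tsum_mul_right]
  exact (summable_mul_of_bddAbove_abs hg hs).tsum_le_tsum
    (fun n => le_of_abs_le (abs_mul_le_abs_mul_iSup_abs g hs n)) (hg.abs.mul_right _)

lemma tsum_mul_lt_tsum_abs_mul_iSup_abs (hg : Summable g)
    (hs : BddAbove (Set.range fun n => |s n|)) {n : ι} (hgn : g n ≠ 0)
    (hsn : |s n| < ⨆ k, |s k|) :
    ∑' n, g n * s n < (∑' n, |g n|) * ⨆ n, |s n| := by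
  have hlt : g n * s n < |g n| * ⨆ k, |s k| :=
    calc g n * s n ≤ |g n| * |s n| := (le_abs_self _).trans_eq (abs_mul _ _)
      _ < |g n| * ⨆ k, |s k| := mul_lt_mul_of_pos_left hsn (abs_pos.2 hgn)
  rw [← tsum_mul_right]
  exact (summable_mul_of_bddAbove_abs hg hs).tsum_lt_tsum
    (fun k => le_of_abs_le (abs_mul_le_abs_mul_iSup_abs g hs k)) hlt (hg.abs.mul_right _)

lemma exists_mem_abs_lt_iSup_abs {t : Set ι} (ht : t.Infinite) (hs : Tendsto s cofinite (𝓝 0))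
    (hpos : 0 < ⨆ n, |s n|) : ∃ n ∈ t, |s n| < ⨆ k, |s k| :=
  (ht.frequently_cofinite.and_eventually
    (hs.abs.eventually_lt_const (by rwa [abs_zero]))).exists

end Holder

section TruncatedSign

variable {ι : Type*}

lemma abs_truncatedSign_le_one (g : ι → ℝ) (F : Finset ι) (n : ι) : |truncatedSign g F n| ≤ 1 := by
  by_cases hn : n ∈ F
  · rcases lt_trichotomy (g n) 0 with h | h | h <;> simp [truncatedSign, hn, h]
  · simp [truncatedSign, hn]

lemma tendsto_truncatedSign_cofinite (g : ι → ℝ) (F : Finset ι) :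
    Tendsto (truncatedSign g F) cofinite (𝓝 0) := by
  refine tendsto_const_nhds.congr' ?_
  filter_upwards [F.finite_toSet.compl_mem_cofinite] with n hn
  exact (Set.indicator_of_notMem hn _).symm

lemma tsum_mul_truncatedSign (g : ι → ℝ) (F : Finset ι) :
    ∑' n, g n * truncatedSign g F n = ∑ n ∈ F, |g n| := by
  rw [tsum_eq_sum (s := F) fun n hn => by simp [truncatedSign, hn]]
  exact Finset.sum_congr rfl fun n hn => by simp [truncatedSign, hn, self_mul_sign]

end TruncatedSign

section LyapunovFunctional

variable {ι : Type*} {g s : ι → ℝ}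

lemma lyapunovFunctional_eq_sq_add (g s : ι → ℝ) :
    lyapunovFunctional g s = ((∑' n, |g n|) - ⨆ n, |s n|) ^ 2 +
      2 * ((∑' n, |g n|) * (⨆ n, |s n|) - ∑' n, g n * s n) := by
  rw [lyapunovFunctional]
  ring

lemma lyapunovFunctional_nonneg (hg : Summable g) (hs : BddAbove (Set.range fun n => |s n|)) :
    0 ≤ lyapunovFunctional g s := by
  rw [lyapunovFunctional_eq_sq_add]
  linarith [sq_nonneg ((∑' n, |g n|) - ⨆ n, |s n|), tsum_mul_le_tsum_abs_mul_iSup_abs hg hs]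

lemma lyapunovFunctional_pos (hg : Summable g) (hsupp : g.support.Infinite)
    (hs : Tendsto s cofinite (𝓝 0)) : 0 < lyapunovFunctional g s := by
  have hbdd : BddAbove (Set.range fun n => |s n|) := hs.abs.bddAbove_range_of_cofinite
  rw [lyapunovFunctional_eq_sq_add]
  rcases (Real.iSup_nonneg fun n => abs_nonneg (s n)).eq_or_lt with hM | hM
  · obtain ⟨n, hn⟩ := hsupp.nonempty
    have hnorm : 0 < ∑' n, |g n| := hg.abs.tsum_pos (fun _ => abs_nonneg _) n (abs_pos.2 hn)
    have hholder := tsum_mul_le_tsum_abs_mul_iSup_abs hg hbdd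
    rw [← hM] at hholder ⊢
    linarith [pow_pos hnorm 2]
  · obtain ⟨n, hgn, hsn⟩ := exists_mem_abs_lt_iSup_abs hsupp hs hM
    linarith [sq_nonneg ((∑' n, |g n|) - ⨆ n, |s n|),
      tsum_mul_lt_tsum_abs_mul_iSup_abs hg hbdd hgn hsn]

lemma lyapunovFunctional_tsum_abs_smul_le (g : ι → ℝ) (hs : ∀ n, |s n| ≤ 1) :
    lyapunovFunctional g ((∑' n, |g n|) • s) ≤
      2 * (∑' n, |g n|) * ((∑' n, |g n|) - ∑' n, g n * s n) := by
  set R := ∑' n, |g n| with hR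
  have hR0 : 0 ≤ R := tsum_nonneg fun n => abs_nonneg (g n)
  have hpair : ∑' n, g n * (R • s) n = R * ∑' n, g n * s n := by
    simp only [Pi.smul_apply, smul_eq_mul, mul_left_comm _ R, tsum_mul_left]
  have hsup : ⨆ n, |(R • s) n| ≤ R := by
    refine Real.iSup_le (fun n => ?_) hR0
    rw [Pi.smul_apply, smul_eq_mul, abs_mul, abs_of_nonneg hR0]
    exact mul_le_of_le_one_right hR0 (hs n)
  have hsq : (⨆ n, |(R • s) n|) ^ 2 ≤ R ^ 2 :=
    pow_le_pow_left₀ (Real.iSup_nonneg fun _ => abs_nonneg _) hsup 2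
  rw [lyapunovFunctional, hpair, ← hR]
  linarith

lemma exists_lyapunovFunctional_lt (hg : Summable g) {ε : ℝ} (hε : 0 < ε) :
    ∃ s : ι → ℝ, Tendsto s cofinite (𝓝 0) ∧ lyapunovFunctional g s < ε := by
  set R := ∑' n, |g n|
  have hlim : Tendsto (fun F : Finset ι => 2 * R * (R - ∑ n ∈ F, |g n|)) atTop (𝓝 0) := by
    have hsum : Tendsto (fun F : Finset ι => ∑ n ∈ F, |g n|) atTop (𝓝 R) := hg.abs.hasSum
    simpa only [sub_self, mul_zero] using (hsum.const_sub R).const_mul (2 * R)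
  obtain ⟨F, hF⟩ := (hlim.eventually_lt_const hε).exists
  refine ⟨R • truncatedSign g F, ?_, ?_⟩
  · simpa only [Pi.smul_def, smul_zero] using (tendsto_truncatedSign_cofinite g F).const_smul R
  · calc lyapunovFunctional g (R • truncatedSign g F)
        ≤ 2 * R * (R - ∑' n, g n * truncatedSign g F n) :=
          lyapunovFunctional_tsum_abs_smul_le g (abs_truncatedSign_le_one g F)
      _ = 2 * R * (R - ∑ n ∈ F, |g n|) := by rw [tsum_mul_truncatedSign]
      _ < ε := hF

lemma isGLB_lyapunovFunctional (hg : Summable g) :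
    IsGLB {v | ∃ s : ι → ℝ, Tendsto s cofinite (𝓝 0) ∧ v = lyapunovFunctional g s} 0 := by
  refine ⟨?_, fun b hb => le_of_forall_gt fun ε hε => ?_⟩
  · rintro v ⟨s, hs, rfl⟩
    exact lyapunovFunctional_nonneg hg hs.abs.bddAbove_range_of_cofinite
  · obtain ⟨s, hs, hlt⟩ := exists_lyapunovFunctional_lt hg hε
    exact (hb ⟨s, hs, rfl⟩).trans_lt hlt

end LyapunovFunctional

lemma cofinite_eq_atTop_of_locallyFiniteOrderBot {α : Type*} [LinearOrder α]
    [LocallyFiniteOrderBot α] [NoTopOrder α] : (cofinite : Filter α) = atTop := by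
  refine le_antisymm (le_iInf fun a => ?_) atTop_le_cofinite
  rw [le_principal_iff, mem_cofinite, Set.compl_Ici]
  exact Set.finite_Iio a

theorem statement_16_general {ι : Type*} {g : ι → ℝ} (hg : Summable g)
    (hsupp : g.support.Infinite) :
    (∀ s : ι → ℝ, Tendsto s cofinite (𝓝 0) → 0 < lyapunovFunctional g s) ∧
      sInf {v | ∃ s : ι → ℝ, Tendsto s cofinite (𝓝 0) ∧ v = lyapunovFunctional g s} = 0 :=
  ⟨fun _ => lyapunovFunctional_pos hg hsupp,
    (isGLB_lyapunovFunctional hg).csInf_eq (isGLB_lyapunovFunctional hg).nonempty⟩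

/-- Let `g ∈ ℓ¹` have nonnegative entries summing to `r > 0`, with infinitely many
positive entries. For null sequences `s` (elements of `c₀`), the functional
`V(g,s) = r² - 2⟨g,s⟩ + ‖s‖∞²` is strictly positive, yet its infimum over `c₀` is `0`;
in particular `π_{c₀}(g) = ∅`. -/
theorem statement_16 (r : ℝ) (hr : 0 < r) (g : ℕ+ → ℝ) (hg0 : ∀ n, 0 ≤ g n)
    (hgsum : HasSum g r) (hginf : {n : ℕ+ | 0 < g n}.Infinite) :
    (∀ s : ℕ+ → ℝ, Tendsto s atTop (nhds 0) →
        0 < r ^ 2 - 2 * (∑' n, g n * s n) + (⨆ n, |s n|) ^ 2) ∧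
      sInf {v : ℝ | ∃ s : ℕ+ → ℝ, Tendsto s atTop (nhds 0) ∧
          v = r ^ 2 - 2 * (∑' n, g n * s n) + (⨆ n, |s n|) ^ 2} = 0 := by
  simpa only [lyapunovFunctional, abs_of_nonneg (hg0 _), hgsum.tsum_eq,
    cofinite_eq_atTop_of_locallyFiniteOrderBot]
    using statement_16_general hgsum.summable (hginf.mono fun _ hn => ne_of_gt hn)
end
end
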